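/- arXiv:1006.3237 — 8 statements merged into one kernel-verified Lean document; each statement's English description precedes it below -/
import Mathlib

section
/- Let F be a field and D a quaternion division algebra over F, i.e., a division ring that is a central F-algebra of dimension 4 over F. Let L be a field extension of F with [L:F] = 2. Then L splits D, i.e., the base change D ⊗_F L is isomorphic as an L-algebra to the algebra of 2×2 matrices over L, if and only if there exists an injective F-algebra homomorphism from L into D. -/
open TensorProduct

theorem embeds_of_splits_aux
    (F : Type*) [Field F]
    (D : Type*) [DivisionRing D] [Algebra F D]
    (hdim : Module.finrank F D = 4)
    (L : Type*) [Field L] [Algebra F L]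
    (hL : Module.finrank F L = 2)
    (e : (L ⊗[F] D) ≃ₐ[L] Matrix (Fin 2) (Fin 2) L) :
    ∃ f : L →ₐ[F] D, Function.Injective f := by
  have : FiniteDimensional F D := Module.finite_of_finrank_pos (by omega)
  have : FiniteDimensional F L := Module.finite_of_finrank_pos (by omega)
  let g : D →ₐ[F] Matrix (Fin 2) (Fin 2) L :=
    (e.toAlgHom.restrictScalars F).comp Algebra.TensorProduct.includeRight
  let v : Fin 2 → L := Pi.single 0 1
  have hv : v ≠ 0 := fun h => by
    have := congrFun h 0
    simp [v] at this
  let T : D →ₗ[F] (Fin 2 → L) :=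
    { toFun := fun d => (g d).mulVec v
      map_add' := fun x y => by rw [map_add, Matrix.add_mulVec]
      map_smul' := fun c x => by rw [map_smul, Matrix.smul_mulVec]; rfl }
  have hT : ∀ d, T d = (g d).mulVec v := fun _ => rfl
  have hinj : Function.Injective T := by
    rw [injective_iff_map_eq_zero]
    intro d hd
    by_contra hne
    apply hv
    rw [hT] at hd
    have : (g (d⁻¹ * d)).mulVec v = 0 := by
      rw [map_mul, ← Matrix.mulVec_mulVec, hd, Matrix.mulVec_zero]
    rwa [inv_mul_cancel₀ hne, map_one, Matrix.one_mulVec] at this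
  have hfr : Module.finrank F D = Module.finrank F (Fin 2 → L) := by
    rw [Module.finrank_pi_fintype]; simp [hL, hdim]
  have hsurj := (LinearMap.injective_iff_surjective_of_finrank_eq_finrank hfr).1 hinj
  choose φ hφ using fun l : L => hsurj (l • v)
  have hmul : ∀ x d, T (x * d) = (g x).mulVec (T d) := fun x d => by
    rw [hT, hT, map_mul, Matrix.mulVec_mulVec]
  let f : L →ₐ[F] D :=
    { toFun := φ
      map_one' := hinj (by rw [hφ, hT]; simp)
      map_zero' := hinj (by rw [hφ]; simp)
      map_add' := fun x y => hinj (by rw [map_add, hφ, hφ, hφ, add_smul])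
      map_mul' := fun x y => hinj (by
        rw [hmul, hφ, hφ, Matrix.mulVec_smul, ← hT, hφ, smul_smul, mul_comm])
      commutes' := fun c => hinj (by
        rw [hφ, Algebra.algebraMap_eq_smul_one, Algebra.algebraMap_eq_smul_one, map_smul, hT]
        simp) }
  exact ⟨f, f.toRingHom.injective⟩

theorem splits_of_embeds_aux
    (F : Type*) [Field F]
    (D : Type*) [DivisionRing D] [Algebra F D]
    (hcentral : Subalgebra.center F D = ⊥)
    (hdim : Module.finrank F D = 4)
    (L : Type*) [Field L] [Algebra F L]
    (hL : Module.finrank F L = 2)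
    (f : L →ₐ[F] D) :
    Nonempty ((L ⊗[F] D) ≃ₐ[L] Matrix (Fin 2) (Fin 2) L) := by
  have : FiniteDimensional F D := Module.finite_of_finrank_pos (by omega)
  have : FiniteDimensional F L := Module.finite_of_finrank_pos (by omega)
  let _ : Module L D :=
    { smul := fun l x => x * f l
      one_smul := fun x => by change x * f 1 = x; simp
      mul_smul := fun a b x => by
        change x * f (a * b) = x * f b * f a
        rw [mul_comm, map_mul, mul_assoc]
      smul_zero := fun a => zero_mul _
      smul_add := fun a x y => add_mul _ _ _
      add_smul := fun a b x => by
        change x * f (a + b) = x * f a + x * f b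
        rw [map_add, mul_add]
      zero_smul := fun x => by change x * f 0 = 0; simp }
  have hs : ∀ (l : L) (x : D), l • x = x * f l := fun _ _ => rfl
  have : IsScalarTower F L D := ⟨fun c l x => by
    rw [hs, hs, map_smul, mul_smul_comm]⟩
  have : FiniteDimensional L D := FiniteDimensional.right F L D
  have h2 : Module.finrank L D = 2 := by
    have := Module.finrank_mul_finrank F L D
    rw [hL, hdim] at this; omega
  let g : D →ₐ[F] Module.End L D :=
    { toFun := fun d =>
        { toFun := fun x => d * x
          map_add' := fun x y => mul_add _ _ _
          map_smul' := fun l x => by simp only [hs, RingHom.id_apply, mul_assoc] }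
      map_one' := by ext; simp
      map_zero' := by ext; simp
      map_add' := fun x y => by ext; simp [add_mul]
      map_mul' := fun x y => by ext; simp [mul_assoc]
      commutes' := fun c => by
        ext x
        simp [Module.algebraMap_end_apply, Algebra.smul_def] }
  have hg : ∀ d x, g d x = d * x := fun _ _ => rfl
  let Φ : L ⊗[F] D →ₐ[L] Module.End L D :=
    Algebra.TensorProduct.lift (Algebra.ofId L _) g
      (fun l d => Algebra.commutes l (g d))
  have hΦ : ∀ l d x, Φ (l ⊗ₜ d) x = d * x * f l := fun l d x => by
    have h : Φ (l ⊗ₜ d) = algebraMap L (Module.End L D) l * g d :=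
      Algebra.TensorProduct.lift_tmul _ _ _ _ _
    rw [h]
    rfl
  have hinj : Function.Injective Φ := by
    rw [injective_iff_map_eq_zero]
    intro t ht
    let b := Module.finBasisOfFinrankEq F L hL
    obtain ⟨c, rfl⟩ := TensorProduct.eq_repr_basis_left b t
    rw [Finsupp.sum_fintype _ _ (by simp), Fin.sum_univ_two] at ht ⊢
    have key : ∀ x, c 0 * x * f (b 0) + c 1 * x * f (b 1) = 0 := fun x => by
      have := congrArg (fun h : Module.End L D => h x) ht
      simpa only [map_add, LinearMap.add_apply, hΦ, LinearMap.zero_apply] using this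
    have hb0 : f (b 0) ≠ 0 := by
      rw [Ne, map_eq_zero]; exact b.ne_zero 0
    have hb0' : b 0 ≠ 0 := b.ne_zero 0
    have key2 : ∀ x, c 0 * x + c 1 * (x * f (b 1 / b 0)) = 0 := fun x => by
      have := key (x * f (b 0)⁻¹)
      rw [← mul_assoc, mul_assoc _ _ (f (b 0)), ← map_mul, inv_mul_cancel₀ hb0', map_one,
        mul_one, mul_assoc (c 1), mul_assoc x, ← map_mul, mul_comm _ (b 1),
        ← div_eq_mul_inv] at this
      exact this
    have hc1 : c 1 = 0 := by
      by_contra hne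
      have h1 := key2 1
      rw [mul_one, one_mul] at h1
      have hcen : f (b 1 / b 0) ∈ Subalgebra.center F D := by
        rw [Subalgebra.mem_center_iff]
        intro x
        have h3 := key2 x
        rw [eq_neg_of_add_eq_zero_left h1, neg_mul, mul_assoc, neg_add_eq_zero] at h3
        exact (mul_left_cancel₀ hne h3).symm
      rw [hcentral, Algebra.mem_bot] at hcen
      obtain ⟨r, hr⟩ := hcen
      rw [← f.commutes] at hr
      have h4 : algebraMap F L r = b 1 / b 0 := f.toRingHom.injective hr
      have h5 : b 1 = r • b 0 := by
        rw [Algebra.smul_def, h4, div_mul_cancel₀ _ hb0']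
      have h6 := congrArg (fun z => b.repr z 1) h5
      simp at h6
    have hc0 : c 0 = 0 := by
      have h1 := key2 1
      simpa [hc1] using h1
    simp [hc0, hc1]
  have hfr : Module.finrank L (L ⊗[F] D) = Module.finrank L (Module.End L D) := by
    rw [Module.finrank_baseChange, hdim, Module.finrank_linearMap, h2]
  have hsurj : Function.Surjective Φ :=
    (LinearMap.injective_iff_surjective_of_finrank_eq_finrank (f := Φ.toLinearMap) hfr).1 hinj
  exact ⟨(AlgEquiv.ofBijective Φ ⟨hinj, hsurj⟩).trans
    (algEquivMatrix (Module.finBasisOfFinrankEq L D h2))⟩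



/-- Let `F` be a field and `D` a quaternion division algebra over `F`
(a division ring that is a central `F`-algebra of dimension 4).  Let `L/F` be a field
extension with `[L : F] = 2`.  Then `L` splits `D`, i.e. `L ⊗[F] D ≃ₐ[L] M₂(L)`,
if and only if there is an injective `F`-algebra homomorphism `L → D`. -/
theorem quaternion_splits_iff_embeds
    (F : Type*) [Field F]
    (D : Type*) [DivisionRing D] [Algebra F D]
    (hcentral : Subalgebra.center F D = ⊥)
    (hdim : Module.finrank F D = 4)
    (L : Type*) [Field L] [Algebra F L]
    (hL : Module.finrank F L = 2) :
    Nonempty ((L ⊗[F] D) ≃ₐ[L] Matrix (Fin 2) (Fin 2) L) ↔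
      ∃ f : L →ₐ[F] D, Function.Injective f := by
  constructor
  · rintro ⟨e⟩
    exact embeds_of_splits_aux F D hdim L hL e
  · rintro ⟨f, _⟩
    exact splits_of_embeds_aux F D hcentral hdim L hL f
end

section
/- Let q be a prime power, F = 𝔽_q(T) the field of rational functions in one variable over the finite field 𝔽_q, and D a division ring that is a central F-algebra of dimension 4 over F. Then every finite subgroup G of the multiplicative group D^× is cyclic and its order divides q² − 1. -/
open Polynomial

/-- Finite subgroups of units of a division algebra over a finite field are cyclic. -/
lemma aux_cyclic (k D : Type*) [Field k] [Finite k] [DivisionRing D] [Algebra k D]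
    (G : Subgroup Dˣ) [Finite G] : IsCyclic G := by
  let M : Submonoid D := G.toSubmonoid.map (Units.coeHom D)
  have hM : (M : Set D).Finite := by
    have : Set.Finite (G : Set Dˣ) := Set.toFinite _
    exact this.image _
  let A : Subalgebra k D := Algebra.adjoin k (M : Set D)
  have hA : Subalgebra.toSubmodule A = Submodule.span k (M : Set D) := by
    rw [Algebra.adjoin_eq_span, Submonoid.closure_eq]
  have : Module.Finite k (Submodule.span k (M : Set D)) := Module.Finite.span_of_finite k hM
  have h1 : Finite (Submodule.span k (M : Set D)) := Module.finite_of_finite k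
  rw [← hA] at h1
  have : Finite A := h1
  have hF := Finite.isDomain_to_isField A
  let _ : CommRing A := { (inferInstance : Ring A) with mul_comm := hF.mul_comm }
  let φ : G →* A :=
    { toFun := fun g => ⟨((g : Dˣ) : D), Algebra.subset_adjoin ⟨g, g.2, rfl⟩⟩
      map_one' := rfl
      map_mul' := fun _ _ => rfl }
  refine isCyclic_of_injective_ringHom φ ?_
  intro a b h
  have := congrArg (Subtype.val) h
  exact Subtype.ext (Units.ext this)

lemma aux_const (k : Type*) [Field k] (x : RatFunc k) (hx : IsIntegral k x) :
    ∃ c, algebraMap k (RatFunc k) c = x := by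
  by_contra h
  refine x.transcendental_of_ne_C ?_ hx.isAlgebraic
  rintro ⟨c, rfl⟩
  exact h ⟨c, by simp⟩

lemma aux_deg (F D : Type*) [Field F] [DivisionRing D] [Algebra F D]
    (hcentral : Subalgebra.center F D = ⊥)
    (hdim : Module.finrank F D = 4) (g : D) (hg : IsIntegral F g) :
    (minpoly F g).natDegree = 1 ∨ (minpoly F g).natDegree = 2 := by
  have hfin : Module.Finite F D := Module.finite_of_finrank_pos (by omega)
  have hirr := minpoly.irreducible hg
  have : Fact (Irreducible (minpoly F g)) := ⟨hirr⟩
  let f : AdjoinRoot (minpoly F g) →ₐ[F] D :=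
    Ideal.Quotient.liftₐ _ (aeval g) (by
      intro a ha
      obtain ⟨b, rfl⟩ := Ideal.mem_span_singleton.1 ha
      simp [minpoly.aeval])
  have hL : Module.finrank F (AdjoinRoot (minpoly F g)) = (minpoly F g).natDegree := by
    rw [(AdjoinRoot.powerBasis hirr.ne_zero).finrank, AdjoinRoot.powerBasis_dim]
  let _ : Module (AdjoinRoot (minpoly F g)) D := Module.compHom D f.toRingHom
  have hs : ∀ (a : AdjoinRoot (minpoly F g)) (d : D), a • d = f a * d := fun _ _ => rfl
  have : IsScalarTower F (AdjoinRoot (minpoly F g)) D := by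
    constructor
    intro x y z
    rw [hs, hs, map_smul, smul_mul_assoc]
  have hmul := Module.finrank_mul_finrank F (AdjoinRoot (minpoly F g)) D
  rw [hL, hdim] at hmul
  have hne : (minpoly F g).natDegree ≠ 4 := by
    intro h4
    have : Module.Finite F (AdjoinRoot (minpoly F g)) :=
      (AdjoinRoot.powerBasis hirr.ne_zero).finite
    have hinj : Function.Injective f := f.toRingHom.injective
    have hsurj : Function.Surjective f :=
      (LinearMap.injective_iff_surjective_of_finrank_eq_finrank (f := f.toLinearMap)
        (by rw [hL, h4, hdim])).1 hinj
    have hc : Subalgebra.center F D = ⊤ := by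
      rw [eq_top_iff]
      intro x _
      rw [Subalgebra.mem_center_iff]
      intro y
      obtain ⟨a, rfl⟩ := hsurj x
      obtain ⟨b, rfl⟩ := hsurj y
      rw [← map_mul, ← map_mul, mul_comm]
    rw [hcentral] at hc
    have := Subalgebra.finrank_bot (F := F) (E := D)
    rw [hc, subalgebra_top_finrank_eq_submodule_top_finrank, finrank_top, hdim] at this
    omega
  have hpos := minpoly.natDegree_pos hg
  have hd : (minpoly F g).natDegree ∣ 4 := ⟨_, hmul.symm⟩
  have hle := Nat.le_of_dvd (by norm_num) hd
  interval_cases h : (minpoly F g).natDegree <;> omega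

lemma aux_pow (k D : Type*) [Field k] [Fintype k] [DivisionRing D] [Algebra (RatFunc k) D]
    (g : D) (m : ℕ) (hm : m ≠ 0) (hgm : g ^ m = 1) :
    g ^ (Fintype.card k ^ (minpoly (RatFunc k) g).natDegree - 1) = 1 := by
  have hmon : (X ^ m - 1 : k[X]).Monic := by
    simpa using monic_X_pow_sub_C (1 : k) hm
  have hint : IsIntegral (RatFunc k) g := 
    ⟨X ^ m - 1, by simpa using monic_X_pow_sub_C (1 : RatFunc k) hm, by simp [hgm]⟩
  have hdvd : minpoly (RatFunc k) g ∣ (X ^ m - 1 : k[X]).map (algebraMap k (RatFunc k)) := by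
    apply minpoly.dvd
    simp [hgm]
  have hl := integralClosure.mem_lifts_of_monic_of_dvd_map (RatFunc k) hmon
    (minpoly.monic hint) hdvd
  have hl2 : minpoly (RatFunc k) g ∈ lifts (algebraMap k (RatFunc k)) := by
    rw [lifts_iff_coeff_lifts] at hl ⊢
    intro n
    obtain ⟨y, hy⟩ := hl n
    obtain ⟨c, hc⟩ := aux_const k _ y.2
    exact ⟨c, hc.trans hy⟩
  obtain ⟨Q, hQ, hdeg, hQm⟩ := lifts_and_natDegree_eq_and_monic hl2 (minpoly.monic hint)
  have hirr : Irreducible Q := hQm.irreducible_of_irreducible_map (algebraMap k (RatFunc k)) Q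
    (hQ ▸ minpoly.irreducible hint)
  have : Fact (Irreducible Q) := ⟨hirr⟩
  have : Module.Finite k (AdjoinRoot Q) := (AdjoinRoot.powerBasis hirr.ne_zero).finite
  have : Finite (AdjoinRoot Q) := Module.finite_of_finite k
  have := Fintype.ofFinite (AdjoinRoot Q)
  have hcard : Fintype.card (AdjoinRoot Q) = Fintype.card k ^ Q.natDegree := by
    rw [Module.card_eq_pow_finrank (K := k), (AdjoinRoot.powerBasis hirr.ne_zero).finrank,
      AdjoinRoot.powerBasis_dim]
  have hroot : AdjoinRoot.root Q ≠ 0 := by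
    intro h0
    rw [← AdjoinRoot.mk_X, AdjoinRoot.mk_eq_zero] at h0
    have h1 := (minpoly.aeval (RatFunc k) g)
    obtain ⟨r, hr⟩ := h0
    have h2 : (X : (RatFunc k)[X]) = minpoly (RatFunc k) g * r.map (algebraMap k (RatFunc k)) := by
      rw [← hQ, ← Polynomial.map_mul, ← hr, map_X]
    have h3 := congrArg (aeval g) h2
    rw [map_mul, h1, zero_mul, aeval_X] at h3
    simp [h3, hm] at hgm
  have hp := FiniteField.pow_card_sub_one_eq_one _ hroot
  rw [hcard, hdeg] at hp
  have hd : Q ∣ X ^ (Fintype.card k ^ (minpoly (RatFunc k) g).natDegree - 1) - 1 := by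
    rw [← AdjoinRoot.mk_eq_zero]
    simp [hp]
  have h4 := Polynomial.map_dvd (algebraMap k (RatFunc k)) hd
  rw [hQ] at h4
  have h5 := (aeval_eq_zero_of_dvd_aeval_eq_zero h4 (minpoly.aeval _ g))
  simpa [sub_eq_zero] using h5


/-- Let `q` be a prime power, `F = 𝔽_q(T)`, and `D` a division ring that is
a central `F`-algebra of dimension 4.  Then every finite subgroup `G` of `Dˣ` is cyclic and
its order divides `q² - 1`. -/
theorem finite_subgroup_of_quaternion_units_cyclic
    (Fq : Type*) [Field Fq] [Fintype Fq]
    (D : Type*) [DivisionRing D] [Algebra (RatFunc Fq) D]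
    (hcentral : Subalgebra.center (RatFunc Fq) D = ⊥)
    (hdim : Module.finrank (RatFunc Fq) D = 4)
    (G : Subgroup Dˣ) [Finite G] :
    IsCyclic G ∧ Nat.card G ∣ (Fintype.card Fq) ^ 2 - 1 := by
  let _ : Algebra Fq D :=
    Algebra.compHom D (algebraMap Fq (RatFunc Fq))
  have hc : IsCyclic G := aux_cyclic Fq D G
  refine ⟨hc, ?_⟩
  obtain ⟨g, hg⟩ := hc.exists_generator
  rw [← orderOf_eq_card_of_forall_mem_zpowers hg]
  have hm : orderOf g ≠ 0 := (orderOf_pos g).ne'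
  have hgm : (((g : Dˣ) : D)) ^ orderOf g = 1 := by
    have := congrArg ((Units.coeHom D).comp G.subtype) (pow_orderOf_eq_one g)
    rw [map_pow, map_one] at this
    exact this
  have hint : IsIntegral (RatFunc Fq) ((g : Dˣ) : D) :=
    ⟨X ^ orderOf g - 1, by simpa using monic_X_pow_sub_C (1 : RatFunc Fq) hm, by simp [hgm]⟩
  have hp := aux_pow Fq D _ _ hm hgm
  have hd : orderOf g ∣
      Fintype.card Fq ^ (minpoly (RatFunc Fq) ((g : Dˣ) : D)).natDegree - 1 := by
    apply orderOf_dvd_of_pow_eq_one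
    apply Subtype.ext
    apply Units.ext
    simpa using hp
  rcases aux_deg (RatFunc Fq) D hcentral hdim _ hint with h | h
  · rw [h] at hd
    exact hd.trans (Nat.pow_sub_one_dvd_pow_sub_one _ (by norm_num))
  · rwa [h] at hd
end

section
/- Let q be a prime power and S a nonempty finite set of monic irreducible polynomials in 𝔽_q[T]; set s := ∑_{f ∈ S} deg f. Then there exists a monic irreducible polynomial o ∈ 𝔽_q[T] with o ∉ S and q^{deg o} ≤ q·s (equivalently, deg o ≤ log_q(s) + 1). -/
/-- Let `q` be a prime power and `S` a nonempty finite set of monic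
irreducible polynomials in `𝔽_q[T]`; set `s := ∑_{f ∈ S} deg f`.  Then there is a monic
irreducible polynomial `o ∉ S` with `q ^ deg o ≤ q * s`. -/
theorem exists_monic_irreducible_small_degree_not_mem
    (Fq : Type*) [Field Fq] [Fintype Fq]
    (S : Finset (Polynomial Fq)) (hS : S.Nonempty)
    (hSmi : ∀ f ∈ S, f.Monic ∧ Irreducible f) :
    ∃ o : Polynomial Fq, o.Monic ∧ Irreducible o ∧ o ∉ S ∧
      Fintype.card Fq ^ o.natDegree ≤ Fintype.card Fq * ∑ f ∈ S, f.natDegree := by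
  classical
  set s := ∑ f ∈ S, f.natDegree with hs
  have hq : 1 < Fintype.card Fq := Fintype.one_lt_card
  have hs0 : s ≠ 0 := by
    obtain ⟨f, hf⟩ := hS
    have h1 : f.natDegree ≤ s := Finset.single_le_sum (f := fun f : Polynomial Fq => f.natDegree)
      (fun _ _ => Nat.zero_le _) hf
    have h2 := (hSmi f hf).2.natDegree_pos
    omega
  obtain ⟨p, hp⟩ := CharP.exists Fq
  have : Fact p.Prime := ⟨CharP.char_is_prime Fq p⟩
  obtain ⟨m, hlow, hup⟩ : ∃ m, Fintype.card Fq ^ m ≤ s ∧ s < Fintype.card Fq ^ (m + 1) :=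
    ⟨Nat.log (Fintype.card Fq) s, Nat.pow_log_le_self _ hs0, Nat.lt_pow_succ_log_self hq _⟩
  obtain ⟨K, _, _, hfr⟩ : ∃ (K : Type) (_ : Field K) (_ : Algebra Fq K),
      Module.finrank Fq K = m + 1 :=
    ⟨FiniteField.Extension Fq p (m + 1), inferInstance, inferInstance,
      FiniteField.finrank_extension Fq p (m + 1)⟩
  have : Module.Finite Fq K := Module.finite_of_finrank_pos (by omega)
  have : Finite K := Module.finite_of_finite Fq
  have : Fintype K := Fintype.ofFinite K
  have hcard : Fintype.card K = Fintype.card Fq ^ (m + 1) := by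
    rw [← hfr]; exact Module.card_eq_pow_finrank
  by_contra hcon
  push Not at hcon
  have hmem : ∀ a : K, minpoly Fq a ∈ S := by
    intro a
    by_contra ha
    have hi : IsIntegral Fq a := Algebra.IsIntegral.isIntegral a
    have h := hcon _ (minpoly.monic hi) (minpoly.irreducible hi) ha
    have hd : (minpoly Fq a).natDegree ≤ m + 1 := (minpoly.natDegree_le a).trans hfr.le
    have h1 : Fintype.card Fq ^ (minpoly Fq a).natDegree ≤ Fintype.card Fq ^ (m + 1) :=
      Nat.pow_le_pow_right hq.le hd
    have h2 : Fintype.card Fq ^ (m + 1) ≤ Fintype.card Fq * s := by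
      rw [pow_succ']; exact Nat.mul_le_mul_left _ hlow
    omega
  have hPm : (∏ f ∈ S, f).Monic := Polynomial.monic_prod_of_monic _ _ fun f hf => (hSmi f hf).1
  have hPd : (∏ f ∈ S, f).natDegree = s :=
    Polynomial.natDegree_prod_of_monic _ _ fun f hf => (hSmi f hf).1
  have hz := Polynomial.eq_zero_of_natDegree_lt_card_of_eval_eq_zero
    ((∏ f ∈ S, f).map (algebraMap Fq K)) (f := (id : K → K)) Function.injective_id (fun a => by
      rw [Polynomial.eval_map_algebraMap, map_prod]
      exact Finset.prod_eq_zero (hmem a) (minpoly.aeval Fq a))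
    (by rw [Polynomial.natDegree_map, hPd, hcard]; exact hup)
  exact (hPm.map (algebraMap Fq K)).ne_zero hz
end

section
/- Let q be an odd prime power, F = 𝔽_q(T), ξ ∈ 𝔽_q^×, and let α₁ ≠ α₂ ∈ 𝔽_q with 𝔯 = (T − α₁)(T − α₂) ∈ 𝔽_q[T]. Set b₀ = (2T − (α₁ + α₂))/(α₁ − α₂) and d₀ = −2/(α₁ − α₂). Then b₀, d₀ ∈ 𝔽_q[T], so the element θ₂ := b₀·i + d₀·k lies in the 𝔽_q[T]-subalgebra Λ of H(ξ,𝔯) spanned by 1, i, j, k, and θ₂ satisfies θ₂² = ξ·1. -/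
open Quaternion Polynomial

/-- Let `q` be an odd prime power, `ξ ∈ 𝔽_q^×`, `α₁ ≠ α₂ ∈ 𝔽_q`,
`𝔯 = (T − α₁)(T − α₂)`.  With `b₀ = (2T − (α₁+α₂))/(α₁−α₂)` and `d₀ = −2/(α₁−α₂)`
(which are polynomials), the element `θ₂ = b₀·i + d₀·k` of the `𝔽_q[T]`-subalgebra `Λ`
of `H(ξ,𝔯)` satisfies `θ₂² = ξ·1`. -/
theorem theta_two_sq_eq_xi
    (Fq : Type*) [Field Fq] [Fintype Fq] (hodd : Odd (Fintype.card Fq))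
    (ξ : Fq) (hξ : ξ ≠ 0) (α₁ α₂ : Fq) (hα : α₁ ≠ α₂) :
    let r : Polynomial Fq := (X - C α₁) * (X - C α₂)
    let b₀ : Polynomial Fq := C (α₁ - α₂)⁻¹ * (2 * X - C (α₁ + α₂))
    let d₀ : Polynomial Fq := C (-(2) * (α₁ - α₂)⁻¹)
    let θ₂ : ℍ[RatFunc Fq, RatFunc.C ξ, algebraMap (Polynomial Fq) (RatFunc Fq) r] :=
      ⟨0, algebraMap (Polynomial Fq) (RatFunc Fq) b₀, 0,
        algebraMap (Polynomial Fq) (RatFunc Fq) d₀⟩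
    θ₂ ^ 2 = ((RatFunc.C ξ : RatFunc Fq) :
        ℍ[RatFunc Fq, RatFunc.C ξ, algebraMap (Polynomial Fq) (RatFunc Fq) r]) := by
  intro r b₀ d₀ θ₂
  have hC : (C (α₁ - α₂)⁻¹ : Polynomial Fq) * (C α₁ - C α₂) = 1 := by
    rw [← C_sub, ← C_mul, inv_mul_cancel₀ (sub_ne_zero.mpr hα), C_1]
  have key : b₀ * b₀ - r * d₀ * d₀ = 1 := by
    have h2 : (C (-(2) * (α₁ - α₂)⁻¹) : Polynomial Fq) = -2 * C (α₁ - α₂)⁻¹ := by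
      rw [C_mul, C_neg]
      rfl
    simp only [b₀, d₀, r, h2, C_add]
    linear_combination (C (α₁ - α₂)⁻¹ * (C α₁ - C α₂) + 1) * hC
  simp only [θ₂]
  clear θ₂
  clear_value b₀ d₀
  have key' := congrArg (algebraMap (Polynomial Fq) (RatFunc Fq)) key
  rw [map_sub, map_mul, map_mul, map_mul, map_one] at key'
  rw [sq]
  rw [QuaternionAlgebra.mk_mul_mk]
  ext
  · simp only [QuaternionAlgebra.re_coe]
    linear_combination RatFunc.C ξ * key'
  · simp only [QuaternionAlgebra.imI_coe]
    ring
  · simp only [QuaternionAlgebra.imJ_coe]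
    ring
  · simp only [QuaternionAlgebra.imK_coe]
    ring
end

section
/- Let q be an odd prime power, F = 𝔽_q(T), ξ ∈ 𝔽_q^× a non-square in 𝔽_q, and let 𝔯 ∈ 𝔽_q[T] be a product of at least one and finitely many pairwise distinct monic irreducible polynomials, each of odd degree. Then the quaternion algebra H(ξ,𝔯) over F is a division ring. -/
open Quaternion Polynomial

/-- A non-square constant stays a non-square modulo an irreducible polynomial of odd degree,
so the norm form is anisotropic modulo it. -/
theorem aux_dvd {Fq : Type*} [Field Fq] (ξ : Fq) (hns : ¬ ∃ u : Fq, u ^ 2 = ξ)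
    (p : Polynomial Fq) (hp : Irreducible p) (hodd : Odd p.natDegree)
    (a b : Polynomial Fq) (h : p ∣ a ^ 2 - C ξ * b ^ 2) : p ∣ a ∧ p ∣ b := by
  have : Fact (Irreducible p) := ⟨hp⟩
  have hK : ∀ t : AdjoinRoot p, t ^ 2 ≠ algebraMap Fq (AdjoinRoot p) ξ := by
    intro t ht
    have : Module.Finite Fq (AdjoinRoot p) := (AdjoinRoot.powerBasis hp.ne_zero).finite
    have hfin : Module.finrank Fq (AdjoinRoot p) = p.natDegree := by
      rw [(AdjoinRoot.powerBasis hp.ne_zero).finrank]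
      rfl
    have hirr : Irreducible (X ^ 2 - C ξ : Polynomial Fq) := by
      apply X_pow_sub_C_irreducible_of_prime Nat.prime_two
      intro u hu
      exact hns ⟨u, hu⟩
    have hmin : X ^ 2 - C ξ = minpoly Fq t := by
      apply minpoly.eq_of_irreducible_of_monic hirr
      · simp [ht]
      · exact monic_X_pow_sub_C ξ two_ne_zero
    have hdvd : (minpoly Fq t).natDegree ∣ Module.finrank Fq (AdjoinRoot p) :=
      minpoly.degree_dvd (IsIntegral.of_finite Fq t)
    rw [← hmin, hfin, natDegree_X_pow_sub_C] at hdvd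
    exact (Nat.not_even_iff_odd.mpr hodd) (even_iff_two_dvd.mpr hdvd)
  have h0 : (AdjoinRoot.mk p a) ^ 2 =
      algebraMap Fq (AdjoinRoot p) ξ * (AdjoinRoot.mk p b) ^ 2 := by
    have := AdjoinRoot.mk_eq_zero.mpr h
    rw [map_sub, map_mul, map_pow, map_pow, sub_eq_zero] at this
    rw [this, AdjoinRoot.mk_C]
    rfl
  have hb : AdjoinRoot.mk p b = 0 := by
    by_contra hb
    apply hK (AdjoinRoot.mk p a / AdjoinRoot.mk p b)
    rw [div_pow, h0]
    field_simp
  have ha : AdjoinRoot.mk p a = 0 := by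
    rw [hb] at h0
    simpa using h0
  exact ⟨AdjoinRoot.mk_eq_zero.mp ha, AdjoinRoot.mk_eq_zero.mp hb⟩

theorem aux_descent {Fq : Type*} [Field Fq] (ξ : Fq) (hns : ¬ ∃ u : Fq, u ^ 2 = ξ)
    (p s : Polynomial Fq) (hp : Irreducible p) (hodd : Odd p.natDegree) (hs : ¬ p ∣ s) (n : ℕ) :
    ∀ a b c d : Polynomial Fq, a ^ 2 - C ξ * b ^ 2 = p * s * (c ^ 2 - C ξ * d ^ 2) →
      p ^ n ∣ a ∧ p ^ n ∣ b ∧ p ^ n ∣ c ∧ p ^ n ∣ d := by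
  induction n with
  | zero => intros; simp
  | succ n ih =>
    intro a b c d h
    obtain ⟨⟨a', rfl⟩, ⟨b', rfl⟩⟩ := aux_dvd ξ hns p hp hodd a b
      ⟨s * (c ^ 2 - C ξ * d ^ 2), by rw [h]; ring⟩
    have h2 : p * (a' ^ 2 - C ξ * b' ^ 2) = s * (c ^ 2 - C ξ * d ^ 2) := by
      apply mul_left_cancel₀ hp.ne_zero
      linear_combination h
    obtain ⟨⟨c', rfl⟩, ⟨d', rfl⟩⟩ := aux_dvd ξ hns p hp hodd c d
      ((hp.prime.dvd_or_dvd ⟨_, h2.symm⟩).resolve_left hs)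
    have h3 : a' ^ 2 - C ξ * b' ^ 2 = p * s * (c' ^ 2 - C ξ * d' ^ 2) := by
      apply mul_left_cancel₀ hp.ne_zero
      linear_combination h2
    obtain ⟨h4, h5, h6, h7⟩ := ih a' b' c' d' h3
    simp only [pow_succ']
    exact ⟨mul_dvd_mul_left p h4, mul_dvd_mul_left p h5, mul_dvd_mul_left p h6,
      mul_dvd_mul_left p h7⟩

theorem aux_zero {Fq : Type*} [Field Fq] (p a : Polynomial Fq) (hp : Irreducible p)
    (h : ∀ n : ℕ, p ^ n ∣ a) : a = 0 := by
  by_contra ha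
  obtain ⟨n, hn⟩ := FiniteMultiplicity.of_not_isUnit hp.not_isUnit ha
  exact hn (h _)

/-- The norm form is anisotropic over the rational function field. -/
theorem aux_ratFunc {Fq : Type*} [Field Fq] (ξ : Fq) (hns : ¬ ∃ u : Fq, u ^ 2 = ξ)
    (p s : Polynomial Fq) (hp : Irreducible p) (hodd : Odd p.natDegree) (hs : ¬ p ∣ s)
    (a b c d : RatFunc Fq)
    (h : a ^ 2 - RatFunc.C ξ * b ^ 2 =
      algebraMap (Polynomial Fq) (RatFunc Fq) (p * s) * (c ^ 2 - RatFunc.C ξ * d ^ 2)) :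
    a = 0 ∧ b = 0 ∧ c = 0 ∧ d = 0 := by
  classical
  obtain ⟨m, hm⟩ := IsLocalization.exist_integer_multiples_of_finset
    (nonZeroDivisors (Polynomial Fq)) ({a, b, c, d} : Finset (RatFunc Fq))
  obtain ⟨a', ha⟩ := hm a (by simp)
  obtain ⟨b', hb⟩ := hm b (by simp)
  obtain ⟨c', hc⟩ := hm c (by simp)
  obtain ⟨d', hd⟩ := hm d (by simp)
  rw [Algebra.smul_def] at ha hb hc hd
  have hinj : Function.Injective (algebraMap (Polynomial Fq) (RatFunc Fq)) :=
    RatFunc.algebraMap_injective Fq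
  have hm0 : algebraMap (Polynomial Fq) (RatFunc Fq) m ≠ 0 := by
    rw [Ne, map_eq_zero_iff _ hinj]
    exact nonZeroDivisors.coe_ne_zero m
  have key : a' ^ 2 - C ξ * b' ^ 2 = p * s * (c' ^ 2 - C ξ * d' ^ 2) := by
    apply hinj
    rw [map_mul _ (p * s)]
    simp only [map_sub, map_mul _ (C ξ), map_pow, RatFunc.algebraMap_C, ha, hb, hc, hd]
    linear_combination (algebraMap (Polynomial Fq) (RatFunc Fq) m) ^ 2 * h
  have hall := fun n => aux_descent ξ hns p s hp hodd hs n a' b' c' d' key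
  have za := aux_zero p a' hp fun n => (hall n).1
  have zb := aux_zero p b' hp fun n => (hall n).2.1
  have zc := aux_zero p c' hp fun n => (hall n).2.2.1
  have zd := aux_zero p d' hp fun n => (hall n).2.2.2
  rw [za, map_zero, eq_comm] at ha
  rw [zb, map_zero, eq_comm] at hb
  rw [zc, map_zero, eq_comm] at hc
  rw [zd, map_zero, eq_comm] at hd
  exact ⟨(mul_eq_zero.mp ha).resolve_left hm0, (mul_eq_zero.mp hb).resolve_left hm0,
    (mul_eq_zero.mp hc).resolve_left hm0, (mul_eq_zero.mp hd).resolve_left hm0⟩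

theorem aux_isUnit {F : Type*} [Field F] (u v : F) (x : ℍ[F, u, v])
    (h : x.re ^ 2 - u * x.imI ^ 2 - v * (x.imJ ^ 2 - u * x.imK ^ 2) ≠ 0) : IsUnit x := by
  obtain ⟨n, hn⟩ : ∃ n, n = x.re ^ 2 - u * x.imI ^ 2 - v * (x.imJ ^ 2 - u * x.imK ^ 2) := ⟨_, rfl⟩
  rw [← hn] at h
  have h1 : x * star x = (n : ℍ[F, u, v]) := by
    ext
    · simp
      linear_combination -hn
    all_goals
      simp
      try ring
  have h2 : star x * x = (n : ℍ[F, u, v]) := by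
    ext
    · simp
      linear_combination -hn
    all_goals
      simp
      try ring
  refine ⟨⟨x, n⁻¹ • star x, ?_, ?_⟩, rfl⟩
  · rw [mul_smul_comm, h1]
    ext <;> simp [h]
  · rw [smul_mul_assoc, h2]
    ext <;> simp [h]

/-- Let `q` be an odd prime power, `ξ ∈ 𝔽_q^×` a non-square, and
`𝔯 ∈ 𝔽_q[T]` a product of at least one and finitely many pairwise distinct monic
irreducible polynomials, each of odd degree.  Then the quaternion algebra `H(ξ,𝔯)`
over `F = 𝔽_q(T)` is a division ring: every nonzero element is a unit. -/
theorem quaternion_algebra_isDivisionRing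
    (Fq : Type*) [Field Fq] [Fintype Fq] (hodd : Odd (Fintype.card Fq))
    (ξ : Fq) (hξ : ξ ≠ 0) (hns : ¬ ∃ u : Fq, u ^ 2 = ξ)
    (S : Finset (Polynomial Fq)) (hS : S.Nonempty)
    (hSmi : ∀ f ∈ S, f.Monic ∧ Irreducible f ∧ Odd f.natDegree)
    (r : Polynomial Fq) (hr : r = ∏ f ∈ S, f) :
    ∀ x : ℍ[RatFunc Fq, RatFunc.C ξ, algebraMap (Polynomial Fq) (RatFunc Fq) r],
      x ≠ 0 → IsUnit x := by
  classical
  intro x hx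
  apply aux_isUnit
  intro h0
  apply hx
  obtain ⟨p, hpS⟩ := hS
  obtain ⟨hpm, hp, hpo⟩ := hSmi p hpS
  have hrs : r = p * ∏ f ∈ S.erase p, f := by
    rw [hr, Finset.mul_prod_erase S (fun f => f) hpS]
  have hs : ¬ p ∣ ∏ f ∈ S.erase p, f := by
    intro hd
    obtain ⟨f, hf, hpf⟩ := (hp.prime.dvd_finsetProd_iff _).mp hd
    obtain ⟨hfne, hfS⟩ := Finset.mem_erase.mp hf
    obtain ⟨hfm, hfi, -⟩ := hSmi f hfS
    exact hfne (eq_of_monic_of_associated hfm hpm (hp.associated_of_dvd hfi hpf).symm)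
  have h1 := sub_eq_zero.mp h0
  obtain ⟨h2, h3, h4, h5⟩ := aux_ratFunc ξ hns p _ hp hpo hs _ _ _ _ (by rw [← hrs]; exact h1)
  ext <;> simp [h2, h3, h4, h5]
end

section
/- Let q be an odd prime power, ξ ∈ 𝔽_q^× a non-square in 𝔽_q, and let 𝔯 ∈ 𝔽_q[T] be a product of at least one and finitely many pairwise distinct monic irreducible polynomials, each of odd degree. If x, y, z ∈ 𝔽_q[T] satisfy x² = ξ·y² + 𝔯·z², then x = y = z = 0. Equivalently, the conic X² − ξY² − 𝔯Z² = 0 in the projective plane has no points rational over F = 𝔽_q(T). -/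
open Polynomial

theorem key_dvd {Fq : Type*} [Field Fq] (ξ : Fq) (hξ : ξ ≠ 0) (hns : ¬ ∃ u : Fq, u ^ 2 = ξ)
    (p : Polynomial Fq) (hp : Irreducible p) (hodd : Odd p.natDegree)
    (x y : Polynomial Fq) (h : p ∣ x ^ 2 - C ξ * y ^ 2) : p ∣ x ∧ p ∣ y := by
  haveI : Fact (Irreducible p) := ⟨hp⟩
  have hy : p ∣ y := by
    by_contra hy
    apply hns
    have hy' : AdjoinRoot.mk p y ≠ 0 := by
      rwa [Ne, AdjoinRoot.mk_eq_zero]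
    have h1 : AdjoinRoot.mk p (x ^ 2 - C ξ * y ^ 2) = 0 := AdjoinRoot.mk_eq_zero.2 h
    rw [map_sub, map_mul, map_pow, map_pow, AdjoinRoot.mk_C] at h1
    have h2 : (AdjoinRoot.mk p x / AdjoinRoot.mk p y) ^ 2 = algebraMap Fq (AdjoinRoot p) ξ := by
      rw [AdjoinRoot.algebraMap_eq, div_pow, div_eq_iff (pow_ne_zero 2 hy')]
      exact sub_eq_zero.1 h1
    have h3 := congrArg (Algebra.norm Fq) h2
    have hfr : Module.finrank Fq (AdjoinRoot p) = p.natDegree := by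
      rw [(AdjoinRoot.powerBasis hp.ne_zero).finrank, AdjoinRoot.powerBasis_dim]
    rw [map_pow, Algebra.norm_algebraMap, hfr] at h3
    obtain ⟨k, hk⟩ := hodd
    refine ⟨Algebra.norm Fq (AdjoinRoot.mk p x / AdjoinRoot.mk p y) / ξ ^ k, ?_⟩
    rw [div_pow, h3, hk]
    field_simp
    ring
  refine ⟨?_, hy⟩
  have : p ∣ x ^ 2 := by
    have h4 : p ∣ C ξ * y ^ 2 := Dvd.dvd.mul_left (dvd_pow hy two_ne_zero) _
    simpa using dvd_add h h4
  exact hp.prime.dvd_of_dvd_pow this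

theorem descent_dvd {Fq : Type*} [Field Fq] (ξ : Fq) (hξ : ξ ≠ 0) (hns : ¬ ∃ u : Fq, u ^ 2 = ξ)
    (p s : Polynomial Fq) (hp : Irreducible p) (hodd : Odd p.natDegree) (hs : ¬ p ∣ s) (n : ℕ) :
    ∀ x y z : Polynomial Fq, x ^ 2 = C ξ * y ^ 2 + p * s * z ^ 2 →
      p ^ n ∣ x ∧ p ^ n ∣ y ∧ p ^ n ∣ z := by
  induction n with
  | zero => intro x y z _; simp
  | succ n ih =>
    intro x y z h
    obtain ⟨⟨a, rfl⟩, ⟨b, rfl⟩⟩ := key_dvd ξ hξ hns p hp hodd x y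
      ⟨s * z ^ 2, by rw [h]; ring⟩
    have h1 : p * (a ^ 2 - C ξ * b ^ 2) = s * z ^ 2 := by
      apply mul_left_cancel₀ hp.ne_zero
      linear_combination h
    have h2 : p ∣ z := hp.prime.dvd_of_dvd_pow
      ((hp.prime.dvd_or_dvd ⟨_, h1.symm⟩).resolve_left hs)
    obtain ⟨c, rfl⟩ := h2
    have h3 := ih a b c (by
      apply mul_left_cancel₀ hp.ne_zero
      linear_combination h1)
    simp only [pow_succ']
    exact ⟨mul_dvd_mul_left p h3.1, mul_dvd_mul_left p h3.2.1, mul_dvd_mul_left p h3.2.2⟩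

theorem zero_of_pow_dvd {Fq : Type*} [Field Fq] (p x : Polynomial Fq) (hp : Irreducible p)
    (h : ∀ n, p ^ n ∣ x) : x = 0 := by
  apply Polynomial.eq_zero_of_dvd_of_natDegree_lt (h (x.natDegree + 1))
  rw [natDegree_pow]
  nlinarith [hp.natDegree_pos]

/-- Let `q` be an odd prime power, `ξ ∈ 𝔽_q^×` a non-square, and
`𝔯 ∈ 𝔽_q[T]` a product of at least one and finitely many pairwise distinct monic
irreducible polynomials, each of odd degree.  If `x, y, z ∈ 𝔽_q[T]` satisfy
`x² = ξy² + 𝔯z²`, then `x = y = z = 0`; i.e. the conic `X² − ξY² − 𝔯Z² = 0` has no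
points rational over `𝔽_q(T)`. -/
theorem conic_no_rational_points
    (Fq : Type*) [Field Fq] [Fintype Fq] (hodd : Odd (Fintype.card Fq))
    (ξ : Fq) (hξ : ξ ≠ 0) (hns : ¬ ∃ u : Fq, u ^ 2 = ξ)
    (S : Finset (Polynomial Fq)) (hS : S.Nonempty)
    (hSmi : ∀ f ∈ S, f.Monic ∧ Irreducible f ∧ Odd f.natDegree)
    (r : Polynomial Fq) (hr : r = ∏ f ∈ S, f)
    (x y z : Polynomial Fq) (h : x ^ 2 = C ξ * y ^ 2 + r * z ^ 2) :
    x = 0 ∧ y = 0 ∧ z = 0 := by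
  classical
  obtain ⟨p, hpS⟩ := hS
  obtain ⟨hm, hp, ho⟩ := hSmi p hpS
  have hs : ¬ p ∣ ∏ f ∈ S.erase p, f := by
    intro hd
    obtain ⟨g, hg, hpg⟩ := (hp.prime.dvd_finset_prod_iff _).1 hd
    obtain ⟨hne, hgS⟩ := Finset.mem_erase.1 hg
    obtain ⟨hgm, hgi, _⟩ := hSmi g hgS
    exact hne (eq_of_monic_of_associated hgm hm (hp.associated_of_dvd hgi hpg).symm)
  rw [hr, ← Finset.mul_prod_erase S _ hpS] at h
  have H := fun n => descent_dvd ξ hξ hns p _ hp ho hs n x y z h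
  exact ⟨zero_of_pow_dvd p x hp fun n => (H n).1, zero_of_pow_dvd p y hp fun n => (H n).2.1,
    zero_of_pow_dvd p z hp fun n => (H n).2.2⟩
end

section
/- Let q be an odd prime power, ξ ∈ 𝔽_q^× a non-square in 𝔽_q, and π ∈ 𝔽_q[T] a monic irreducible polynomial of odd degree. Then for any c, d ∈ 𝔽_q[T], not both zero, the element c² − ξd² is nonzero and the exponent of π in the factorization of c² − ξd² (i.e., the π-adic valuation of c² − ξd²) is even. -/
open Polynomial

/-- A non-square stays a non-square in an extension of odd degree; here for `F[T]/(π)`. -/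
theorem dvd_of_dvd_norm_form (F : Type*) [Field F] (ξ : F) (hξ : ξ ≠ 0)
    (hns : ¬ ∃ u : F, u ^ 2 = ξ) (π : Polynomial F) (hπirr : Irreducible π)
    (hπdeg : Odd π.natDegree) (c d : Polynomial F)
    (h : π ∣ c ^ 2 - C ξ * d ^ 2) : π ∣ c ∧ π ∣ d := by
  haveI : Fact (Irreducible π) := ⟨hπirr⟩
  have hd : π ∣ d := by
    by_contra hd
    have hd0 : AdjoinRoot.mk π d ≠ 0 := by rwa [Ne, AdjoinRoot.mk_eq_zero]
    have h1 : AdjoinRoot.mk π c ^ 2 - AdjoinRoot.mk π (C ξ) * AdjoinRoot.mk π d ^ 2 = 0 := by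
      rw [← AdjoinRoot.mk_eq_zero] at h
      simpa using h
    have h2 : (AdjoinRoot.mk π c / AdjoinRoot.mk π d) ^ 2
        = algebraMap F (AdjoinRoot π) ξ := by
      rw [AdjoinRoot.algebraMap_eq, ← AdjoinRoot.mk_C, div_pow, div_eq_iff (pow_ne_zero 2 hd0)]
      exact sub_eq_zero.mp h1
    have h3 := congrArg (Algebra.norm F) h2
    have hfr : Module.finrank F (AdjoinRoot π) = π.natDegree := by
      rw [(AdjoinRoot.powerBasis hπirr.ne_zero).finrank, AdjoinRoot.powerBasis_dim]
    rw [map_pow, Algebra.norm_algebraMap, hfr] at h3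
    obtain ⟨k, hk⟩ := hπdeg
    apply hns
    refine ⟨Algebra.norm F (AdjoinRoot.mk π c / AdjoinRoot.mk π d) / ξ ^ k, ?_⟩
    rw [div_pow, h3, hk, div_eq_iff (pow_ne_zero 2 (pow_ne_zero k hξ))]
    ring
  refine ⟨?_, hd⟩
  have h4 : π ∣ c ^ 2 := by
    have := dvd_add h (((dvd_pow hd two_ne_zero)).mul_left (C ξ))
    simpa using this
  exact hπirr.prime.dvd_of_dvd_pow h4

theorem norm_form_ne_zero (F : Type*) [Field F] (ξ : F)
    (hns : ¬ ∃ u : F, u ^ 2 = ξ) (c d : Polynomial F) (hcd : ¬ (c = 0 ∧ d = 0)) :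
    c ^ 2 - C ξ * d ^ 2 ≠ 0 := by
  intro h
  have h1 : c ^ 2 = C ξ * d ^ 2 := sub_eq_zero.mp h
  by_cases hd : d = 0
  · subst hd
    simp at h1
    exact hcd ⟨h1, rfl⟩
  · have h2 := congrArg leadingCoeff h1
    have hl : d.leadingCoeff ≠ 0 := leadingCoeff_ne_zero.mpr hd
    simp only [leadingCoeff_mul, leadingCoeff_pow, leadingCoeff_C] at h2
    exact hns ⟨c.leadingCoeff / d.leadingCoeff, by
      rw [div_pow, div_eq_iff (pow_ne_zero 2 hl), h2]⟩

theorem norm_form_even_aux (F : Type*) [Field F] (ξ : F) (hξ : ξ ≠ 0)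
    (hns : ¬ ∃ u : F, u ^ 2 = ξ) (π : Polynomial F) (hπirr : Irreducible π)
    (hπdeg : Odd π.natDegree) (n : ℕ) : ∀ c d : Polynomial F, ¬ (c = 0 ∧ d = 0) →
    (c ^ 2 - C ξ * d ^ 2).natDegree ≤ n →
      ∃ m : ℕ, Even m ∧ π ^ m ∣ c ^ 2 - C ξ * d ^ 2 ∧
        ¬ π ^ (m + 1) ∣ c ^ 2 - C ξ * d ^ 2 := by
  induction n using Nat.strong_induction_on with
  | _ n ih =>
    intro c d hcd hn
    by_cases h : π ∣ c ^ 2 - C ξ * d ^ 2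
    · obtain ⟨⟨c', rfl⟩, ⟨d', rfl⟩⟩ := dvd_of_dvd_norm_form F ξ hξ hns π hπirr hπdeg c d h
      have hcd' : ¬ (c' = 0 ∧ d' = 0) := by
        rintro ⟨rfl, rfl⟩
        simp at hcd
      have hN := norm_form_ne_zero F ξ hns c' d' hcd'
      have e : (π * c') ^ 2 - C ξ * (π * d') ^ 2 = π ^ 2 * (c' ^ 2 - C ξ * d' ^ 2) := by ring
      have hp2 : π ^ 2 ≠ 0 := pow_ne_zero 2 hπirr.ne_zero
      rw [e] at hn ⊢
      rw [natDegree_mul hp2 hN, natDegree_pow] at hn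
      have hpos := hπdeg.pos
      obtain ⟨m, hm, h1, h2⟩ := ih _ (by omega) c' d' hcd' le_rfl
      refine ⟨m + 2, hm.add even_two, ?_, ?_⟩
      · rw [pow_add, mul_comm]
        exact mul_dvd_mul_left _ h1
      · rw [show m + 2 + 1 = 2 + (m + 1) by ring, pow_add]
        rwa [mul_dvd_mul_iff_left hp2]
    · exact ⟨0, by simp, by simp, by simpa using h⟩

/-- Let `q` be an odd prime power, `ξ ∈ 𝔽_q^×` a non-square, and
`π ∈ 𝔽_q[T]` monic irreducible of odd degree.  For any `c, d ∈ 𝔽_q[T]`, not both zero,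
the element `c² − ξd²` is nonzero and its `π`-adic valuation is even. -/
theorem valuation_of_norm_form_even
    (Fq : Type*) [Field Fq] [Fintype Fq] (hodd : Odd (Fintype.card Fq))
    (ξ : Fq) (hξ : ξ ≠ 0) (hns : ¬ ∃ u : Fq, u ^ 2 = ξ)
    (π : Polynomial Fq) (hπm : π.Monic) (hπirr : Irreducible π)
    (hπdeg : Odd π.natDegree)
    (c d : Polynomial Fq) (hcd : ¬ (c = 0 ∧ d = 0)) :
    c ^ 2 - C ξ * d ^ 2 ≠ 0 ∧
      ∃ m : ℕ, Even m ∧ π ^ m ∣ c ^ 2 - C ξ * d ^ 2 ∧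
        ¬ π ^ (m + 1) ∣ c ^ 2 - C ξ * d ^ 2 := by
  exact ⟨norm_form_ne_zero Fq ξ hns c d hcd,
    norm_form_even_aux Fq ξ hξ hns π hπirr hπdeg _ c d hcd le_rfl⟩
end

section
/- Let q be an odd prime power, F = 𝔽_q(T), ξ ∈ 𝔽_q^× a non-square in 𝔽_q, and let α₁ ≠ α₂ ∈ 𝔽_q with 𝔯 = (T − α₁)(T − α₂). Let Λ be the 𝔽_q[T]-subalgebra of H(ξ,𝔯) spanned by 1, i, j, k. Set θ₁ := i and θ₂ := b₀·i + d₀·k, where b₀ = (2T − (α₁ + α₂))/(α₁ − α₂) and d₀ = −2/(α₁ − α₂). Then the group Λ^× of invertible elements of Λ is generated by the elements of the form a + b·θ₁ and a + b·θ₂ with a, b ∈ 𝔽_q not both zero. -/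
open Quaternion Polynomial

/-- Membership in the `𝔽_q[T]`-subalgebra `Λ` of `H(ξ,𝔯)` spanned by `1, i, j, k`:
all four coordinates are polynomials. -/
def memLambda {Fq : Type*} [Field Fq] [Fintype Fq] {ξ r : RatFunc Fq}
    (x : ℍ[RatFunc Fq, ξ, r]) : Prop :=
  x.re ∈ (algebraMap (Polynomial Fq) (RatFunc Fq)).range ∧
  x.imI ∈ (algebraMap (Polynomial Fq) (RatFunc Fq)).range ∧
  x.imJ ∈ (algebraMap (Polynomial Fq) (RatFunc Fq)).range ∧
  x.imK ∈ (algebraMap (Polynomial Fq) (RatFunc Fq)).range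


section Helpers

variable {Fq : Type*} [Field Fq]

/-- quaternion with polynomial coordinates -/
noncomputable def polyQ (ξ : Fq) (r a b c d : Polynomial Fq) :
    ℍ[RatFunc Fq, RatFunc.C ξ, algebraMap (Polynomial Fq) (RatFunc Fq) r] :=
  ⟨algebraMap (Polynomial Fq) (RatFunc Fq) a, algebraMap (Polynomial Fq) (RatFunc Fq) b,
   algebraMap (Polynomial Fq) (RatFunc Fq) c, algebraMap (Polynomial Fq) (RatFunc Fq) d⟩

theorem polyQ_mul (ξ : Fq) (r a b c d a' b' c' d' : Polynomial Fq) :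
    polyQ ξ r a b c d * polyQ ξ r a' b' c' d' =
      polyQ ξ r (a * a' + C ξ * b * b' + r * c * c' - C ξ * r * d * d')
        (a * b' + b * a' - r * c * d' + r * d * c')
        (a * c' + C ξ * b * d' + c * a' - C ξ * d * b')
        (a * d' + b * c' + d * a' - c * b') := by
  have h : (RatFunc.C ξ : RatFunc Fq) = algebraMap (Polynomial Fq) (RatFunc Fq) (C ξ) :=
    (RatFunc.algebraMap_C ξ).symm
  ext <;> simp only [polyQ, QuaternionAlgebra.re_mul, QuaternionAlgebra.imI_mul,
    QuaternionAlgebra.imJ_mul, QuaternionAlgebra.imK_mul, map_add, map_sub, map_mul] <;>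
    (try rw [h]) <;> ring

theorem polyQ_inj {ξ : Fq} {r a b c d a' b' c' d' : Polynomial Fq}
    (h : polyQ ξ r a b c d = polyQ ξ r a' b' c' d') :
    a = a' ∧ b = b' ∧ c = c' ∧ d = d' := by
  have inj := RatFunc.algebraMap_injective Fq
  simp only [polyQ, QuaternionAlgebra.mk.injEq] at h
  exact ⟨inj h.1, inj h.2.1, inj h.2.2.1, inj h.2.2.2⟩

theorem polyQ_one (ξ : Fq) (r : Polynomial Fq) : polyQ ξ r 1 0 0 0 = 1 := by
  ext <;> simp [polyQ]

theorem aniso {ξ : Fq} (hns : ¬ ∃ u : Fq, u ^ 2 = ξ) {a b : Fq}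
    (h : a * a - ξ * (b * b) = 0) : a = 0 ∧ b = 0 := by
  by_cases hb : b = 0
  · subst hb; simpa using h
  · exfalso; apply hns; refine ⟨a / b, ?_⟩
    field_simp; linear_combination h

theorem deg_bound {ξ : Fq} (hns : ¬ ∃ u : Fq, u ^ 2 = ξ) {a b : Polynomial Fq} {k : ℕ}
    (h : (a * a - C ξ * (b * b)).natDegree ≤ 2 * k) : a.natDegree ≤ k ∧ b.natDegree ≤ k := by
  by_contra hcon
  set n := max a.natDegree b.natDegree with hn
  have ha : a.natDegree ≤ n := le_max_left _ _
  have hb : b.natDegree ≤ n := le_max_right _ _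
  have hk : k < n := by
    by_contra hh; exact hcon ⟨by omega, by omega⟩
  have h0 : (a * a - C ξ * (b * b)).coeff (n + n) = 0 :=
    coeff_eq_zero_of_natDegree_lt (by omega)
  rw [coeff_sub, coeff_C_mul, coeff_mul_add_eq_of_natDegree_le ha ha,
    coeff_mul_add_eq_of_natDegree_le hb hb] at h0
  obtain ⟨h1, h2⟩ := aniso hns h0
  rcases max_choice a.natDegree b.natDegree with h3 | h3
  · rw [hn, h3] at h1
    have : a = 0 := leadingCoeff_eq_zero.mp h1
    have h4 : a.natDegree = 0 := by rw [this, natDegree_zero]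
    omega
  · rw [hn, h3] at h2
    have : b = 0 := leadingCoeff_eq_zero.mp h2
    have h4 : b.natDegree = 0 := by rw [this, natDegree_zero]
    omega

theorem coeff_sq_second {p : Polynomial Fq} {m : ℕ} (hp : p.natDegree ≤ m + 1) :
    (p * p).coeff (2 * m + 1) = 2 * (p.coeff (m + 1) * p.coeff m) := by
  set l := p.coeff (m + 1) with hl
  set q := p - C l * X ^ (m + 1) with hq
  have hqd : q.natDegree ≤ m := by
    rw [natDegree_le_iff_coeff_eq_zero]
    intro N hN
    rw [hq, coeff_sub, coeff_C_mul, coeff_X_pow]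
    by_cases h : N = m + 1
    · subst h; simp [hl]
    · rw [coeff_eq_zero_of_natDegree_lt (p := p) (by omega)]; simp [h]
  have hpq : p = C l * X ^ (m + 1) + q := by rw [hq]; ring
  have hqm : q.coeff m = p.coeff m := by
    rw [hq, coeff_sub, coeff_C_mul, coeff_X_pow]; simp
  have : p * p = C (l * l) * X ^ (2 * m + 2) + C (2 * l) * (q * X ^ (m + 1)) + q * q := by
    rw [hpq]; simp only [C_mul, map_ofNat]; ring
  rw [this, coeff_add, coeff_add, coeff_C_mul, coeff_C_mul, coeff_X_pow,
    show 2 * m + 1 = m + (m + 1) by ring, coeff_mul_X_pow, hqm,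
    coeff_eq_zero_of_natDegree_lt (p := q * q)
      (lt_of_le_of_lt natDegree_mul_le (by omega)), if_neg (by omega)]
  ring

theorem top_coeffs (s t κ : Fq) {ξ : Fq} {a b c d : Polynomial Fq} {m : ℕ}
    (ha : a.natDegree ≤ m + 1) (hb : b.natDegree ≤ m + 1)
    (hc : c.natDegree ≤ m) (hd : d.natDegree ≤ m)
    (h : a * a - C ξ * (b * b) - (X ^ 2 - C s * X + C t) * (c * c - C ξ * (d * d)) = C κ) :
    (a.coeff (m+1) * a.coeff (m+1) - ξ * (b.coeff (m+1) * b.coeff (m+1)) =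
      c.coeff m * c.coeff m - ξ * (d.coeff m * d.coeff m)) ∧
    (2 * (a.coeff (m+1) * a.coeff m) - ξ * (2 * (b.coeff (m+1) * b.coeff m)) =
      2 * (c.coeff m * (X * c).coeff m) - s * (c.coeff m * c.coeff m)
      - ξ * (2 * (d.coeff m * (X * d).coeff m) - s * (d.coeff m * d.coeff m))) := by
  have hXc : (X * c).natDegree ≤ m + 1 := by
    refine natDegree_mul_le.trans ?_; have := natDegree_X_le (R := Fq); omega
  have hXd : (X * d).natDegree ≤ m + 1 := by
    refine natDegree_mul_le.trans ?_; have := natDegree_X_le (R := Fq); omega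
  have hcc : (c * c).natDegree ≤ 2 * m := natDegree_mul_le.trans (by omega)
  have hdd : (d * d).natDegree ≤ 2 * m := natDegree_mul_le.trans (by omega)
  have h' : a * a - C ξ * (b * b) = (X * c) * (X * c) - C s * (X * (c * c)) + C t * (c * c)
     - C ξ * ((X * d) * (X * d)) + C ξ * (C s * (X * (d * d))) - C ξ * (C t * (d * d))
     + C κ := by linear_combination h
  constructor
  · have e := congrArg (fun p => p.coeff ((m + 1) + (m + 1))) h'
    simp only [coeff_sub, coeff_add, coeff_C_mul] at e
    rw [coeff_mul_add_eq_of_natDegree_le ha ha, coeff_mul_add_eq_of_natDegree_le hb hb,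
      coeff_mul_add_eq_of_natDegree_le hXc hXc, coeff_mul_add_eq_of_natDegree_le hXd hXd,
      coeff_X_mul, coeff_X_mul, show (m + 1) + (m + 1) = (2 * m + 1) + 1 by ring,
      coeff_X_mul, coeff_X_mul, coeff_C_succ,
      coeff_eq_zero_of_natDegree_lt (p := c * c) (n := 2 * m + 1) (by omega),
      coeff_eq_zero_of_natDegree_lt (p := d * d) (n := 2 * m + 1) (by omega),
      coeff_eq_zero_of_natDegree_lt (p := c * c) (n := 2 * m + 1 + 1) (by omega),
      coeff_eq_zero_of_natDegree_lt (p := d * d) (n := 2 * m + 1 + 1) (by omega)] at e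
    linear_combination e
  · have e := congrArg (fun p => p.coeff (2 * m + 1)) h'
    simp only [coeff_sub, coeff_add, coeff_C_mul] at e
    rw [coeff_sq_second ha, coeff_sq_second hb, coeff_sq_second hXc, coeff_sq_second hXd,
      coeff_X_mul, coeff_X_mul,
      coeff_X_mul, coeff_X_mul, coeff_C_succ,
      coeff_eq_zero_of_natDegree_lt (p := c * c) (n := 2 * m + 1) (by omega),
      coeff_eq_zero_of_natDegree_lt (p := d * d) (n := 2 * m + 1) (by omega),
      show 2 * m = m + m by ring,
      coeff_mul_add_eq_of_natDegree_le hc hc, coeff_mul_add_eq_of_natDegree_le hd hd] at e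
    linear_combination e

theorem degree_lt_of {p : Polynomial Fq} {m : ℕ} (hp : p.natDegree ≤ m + 1)
    (h1 : p.coeff (m + 1) = 0) (h0 : p.coeff m = 0) : p.degree < (m : WithBot ℕ) := by
  rw [degree_lt_iff_coeff_zero]
  intro k hk
  by_cases e0 : k = m
  · rw [e0, h0]
  by_cases e1 : k = m + 1
  · rw [e1, h1]
  exact coeff_eq_zero_of_natDegree_lt (by omega)

theorem natDegree_le_of_lt {p : Polynomial Fq} {m : ℕ} (hp : p.degree < (m + 1 : ℕ)) :
    p.natDegree ≤ m := by
  rw [natDegree_le_iff_coeff_eq_zero]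
  intro N hN
  rw [degree_lt_iff_coeff_zero] at hp
  exact hp N hN

theorem degree_lt_of' {p : Polynomial Fq} {m : ℕ} (hp : p.natDegree ≤ m)
    (h0 : p.coeff m = 0) : p.degree < (m : WithBot ℕ) := by
  rw [degree_lt_iff_coeff_zero]
  intro k hk
  by_cases e0 : k = m
  · rw [e0, h0]
  exact coeff_eq_zero_of_natDegree_lt (by omega)

/-- the reduced norm -/
noncomputable def nrdP (ξ : Fq) (r a b c d : Polynomial Fq) : Polynomial Fq :=
  a * a - C ξ * (b * b) - r * (c * c - C ξ * (d * d))

theorem nrdP_mul (ξ : Fq) (r a b c d a' b' c' d' : Polynomial Fq) :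
    nrdP ξ r (a * a' + C ξ * b * b' + r * c * c' - C ξ * r * d * d')
        (a * b' + b * a' - r * c * d' + r * d * c')
        (a * c' + C ξ * b * d' + c * a' - C ξ * d * b')
        (a * d' + b * c' + d * a' - c * b') = nrdP ξ r a b c d * nrdP ξ r a' b' c' d' := by
  unfold nrdP; ring

/-- first reduction, after normalising the leading coefficients -/
theorem step2 (α₁ α₂ : Fq) {ξ κ : Fq} {a b c d : Polynomial Fq} {m : ℕ}
    (ha : a.natDegree ≤ m + 1) (hb : b.natDegree ≤ m + 1)
    (hc : c.natDegree ≤ m) (hd : d.natDegree ≤ m)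
    (hne : ¬ (c.coeff m = 0 ∧ d.coeff m = 0))
    (h : nrdP ξ ((X - C α₁) * (X - C α₂)) a b c d = C κ)
    (hac : a.coeff (m + 1) = c.coeff m) (hbd : b.coeff (m + 1) = - d.coeff m) :
    ∃ A : Fq,
      (C A * c + C ξ * ((C (α₁ - α₂)⁻¹ * (2 * X - C (α₁ + α₂))) * d
        - C (-(2) * (α₁ - α₂)⁻¹) * b)).degree < (m : WithBot ℕ) ∧
      (C A * d + (C (α₁ - α₂)⁻¹ * (2 * X - C (α₁ + α₂))) * c
        + C (-(2) * (α₁ - α₂)⁻¹) * a).degree < (m : WithBot ℕ) := by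
  have h' : a * a - C ξ * (b * b) - (X ^ 2 - C (α₁ + α₂) * X + C (α₁ * α₂)) *
      (c * c - C ξ * (d * d)) = C κ := by
    rw [← h, nrdP, C_add, C_mul]; ring
  obtain ⟨-, h2⟩ := top_coeffs (α₁ + α₂) (α₁ * α₂) κ ha hb hc hd h'
  rw [hac, hbd] at h2
  set δ := (α₁ - α₂)⁻¹ with hδ
  set s := α₁ + α₂ with hs
  have hXc : (X * c).natDegree ≤ m + 1 := by
    refine natDegree_mul_le.trans ?_; have := natDegree_X_le (R := Fq); omega
  have hXd : (X * d).natDegree ≤ m + 1 := by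
    refine natDegree_mul_le.trans ?_; have := natDegree_X_le (R := Fq); omega
  have e1 : ∀ A : Fq, C A * c + C ξ * ((C δ * (2 * X - C s)) * d - C (-(2) * δ) * b) =
      C A * c + (C (2 * ξ * δ) * (X * d) + (C (- (ξ * δ * s)) * d + C (2 * ξ * δ) * b)) := by
    intro A; simp only [C_mul, C_neg, map_ofNat]; ring
  have e2 : ∀ A : Fq, C A * d + (C δ * (2 * X - C s)) * c + C (-(2) * δ) * a =
      C A * d + (C (2 * δ) * (X * c) + (C (- (δ * s)) * c + C (-2 * δ) * a)) := by
    intro A; simp only [C_mul, C_neg, map_ofNat]; ring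
  have key : ∃ A : Fq,
      A * c.coeff m + (2 * ξ * δ * (X * d).coeff m + (-(ξ * δ * s) * d.coeff m +
        2 * ξ * δ * b.coeff m)) = 0 ∧
      A * d.coeff m + (2 * δ * (X * c).coeff m + (-(δ * s) * c.coeff m +
        (-2 * δ) * a.coeff m)) = 0 := by
    by_cases hc0 : c.coeff m = 0
    · have hd0 : d.coeff m ≠ 0 := fun hh => hne ⟨hc0, hh⟩
      refine ⟨-(2 * δ * (X * c).coeff m + (-(δ * s) * c.coeff m +
        (-2 * δ) * a.coeff m)) / d.coeff m, ?_, ?_⟩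
      · rw [hc0] at h2 ⊢
        apply mul_left_cancel₀ hd0
        linear_combination δ * h2
      · field_simp; ring
    · refine ⟨-(2 * ξ * δ * (X * d).coeff m + (-(ξ * δ * s) * d.coeff m +
        2 * ξ * δ * b.coeff m)) / c.coeff m, ?_, ?_⟩
      · field_simp; ring
      · field_simp
        linear_combination (-δ) * h2
  obtain ⟨A, k1, k2⟩ := key
  have z : ∀ {p : Polynomial Fq}, p.natDegree ≤ m → p.coeff (m + 1) = 0 := fun hp =>
    coeff_eq_zero_of_natDegree_lt (by omega)
  have bd : ∀ (u : Fq) {p : Polynomial Fq}, p.natDegree ≤ m + 1 →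
      (C u * p).natDegree ≤ m + 1 := fun u p hp => (natDegree_C_mul_le u p).trans hp
  refine ⟨A, ?_, ?_⟩
  · rw [e1]
    apply degree_lt_of
    · refine natDegree_add_le_of_degree_le (bd _ (by omega)) (natDegree_add_le_of_degree_le
        (bd _ hXd) (natDegree_add_le_of_degree_le (bd _ (by omega)) (bd _ hb)))
    · simp only [coeff_add, coeff_C_mul, coeff_X_mul, z hc, z hd, hbd]; ring
    · simpa only [coeff_add, coeff_C_mul] using k1
  · rw [e2]
    apply degree_lt_of
    · refine natDegree_add_le_of_degree_le (bd _ (by omega)) (natDegree_add_le_of_degree_le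
        (bd _ hXc) (natDegree_add_le_of_degree_le (bd _ (by omega)) (bd _ ha)))
    · simp only [coeff_add, coeff_C_mul, coeff_X_mul, z hc, z hd, hac]; ring
    · simpa only [coeff_add, coeff_C_mul] using k2

theorem hilbert90 {ξ a b c d : Fq} (hns : ¬ ∃ u : Fq, u ^ 2 = ξ)
    (hne : ¬ (c = 0 ∧ d = 0)) (h : a * a - ξ * (b * b) = c * c - ξ * (d * d)) :
    ∃ u v : Fq, ¬ (u = 0 ∧ v = 0) ∧ u * a + ξ * v * b = u * c + ξ * v * d ∧
      u * b + v * a = -(u * d + v * c) := by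
  have hξ : ξ ≠ 0 := fun h0 => hns ⟨0, by simp [h0]⟩
  by_cases h0 : a + c = 0 ∧ b + d = 0
  · refine ⟨ξ * b, -a, ?_, ?_, ?_⟩
    · rintro ⟨h1, h2⟩
      have hb : b = 0 := by simpa [hξ] using h1
      have ha : a = 0 := by simpa using h2
      apply hne
      refine ⟨by linear_combination h0.1 - ha, by linear_combination h0.2 - hb⟩
    · linear_combination (-ξ * b) * h0.1 + ξ * a * h0.2
    · linear_combination (ξ * b) * h0.2 - a * h0.1
  · refine ⟨a + c, -(b + d), ?_, ?_, ?_⟩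
    · rintro ⟨h1, h2⟩; exact h0 ⟨h1, neg_eq_zero.mp h2⟩
    · linear_combination h
    · ring

theorem polyQ_conj (ξ : Fq) (r a b c d : Polynomial Fq) :
    polyQ ξ r a (-b) (-c) (-d) * polyQ ξ r a b c d = polyQ ξ r (nrdP ξ r a b c d) 0 0 0 := by
  rw [polyQ_mul, nrdP]; congr 1 <;> ring

theorem polyQ_conj' (ξ : Fq) (r a b c d : Polynomial Fq) :
    polyQ ξ r a b c d * polyQ ξ r a (-b) (-c) (-d) = polyQ ξ r (nrdP ξ r a b c d) 0 0 0 := by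
  rw [polyQ_mul, nrdP]; congr 1 <;> ring

theorem polyQ_scal (ξ : Fq) (r : Polynomial Fq) {ν : Fq} (h : ν ≠ 0) :
    polyQ ξ r (C ν⁻¹) 0 0 0 * polyQ ξ r (C ν) 0 0 0 = 1 := by
  rw [polyQ_mul, ← polyQ_one]; congr 1
  · rw [← C_mul, inv_mul_cancel₀ h]; simp
  all_goals simp

theorem polyQ_scal' (ξ : Fq) (r : Polynomial Fq) {ν : Fq} (h : ν ≠ 0) :
    polyQ ξ r (C ν) 0 0 0 * polyQ ξ r (C ν⁻¹) 0 0 0 = 1 := by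
  rw [polyQ_mul, ← polyQ_one]; congr 1
  · rw [← C_mul, mul_inv_cancel₀ h]; simp
  all_goals simp

theorem cancel_mem {ξ : Fq} {r a b c d : Polynomial Fq}
    (S : Submonoid ℍ[RatFunc Fq, RatFunc.C ξ, algebraMap (Polynomial Fq) (RatFunc Fq) r])
    {ν : Fq} (hν : ν ≠ 0) (hn : nrdP ξ r a b c d = C ν)
    (hs : polyQ ξ r (C ν⁻¹) 0 0 0 ∈ S) (hc : polyQ ξ r a (-b) (-c) (-d) ∈ S)
    {x : ℍ[RatFunc Fq, RatFunc.C ξ, algebraMap (Polynomial Fq) (RatFunc Fq) r]}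
    (hx : polyQ ξ r a b c d * x ∈ S) : x ∈ S := by
  have : x = polyQ ξ r (C ν⁻¹) 0 0 0 * (polyQ ξ r a (-b) (-c) (-d) *
      (polyQ ξ r a b c d * x)) := by
    rw [← mul_assoc (polyQ ξ r a (-b) (-c) (-d)), polyQ_conj, hn, ← mul_assoc,
      polyQ_scal ξ r hν, one_mul]
  rw [this]
  exact S.mul_mem hs (S.mul_mem hc hx)

theorem theta2_norm {α₁ α₂ : Fq} (hα : α₁ ≠ α₂) (ξ u v : Fq) :
    nrdP ξ ((X - C α₁) * (X - C α₂)) (C u) (C v * (C (α₁ - α₂)⁻¹ * (2 * X - C (α₁ + α₂)))) 0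
      (C v * C (-(2) * (α₁ - α₂)⁻¹)) = C (u * u - ξ * (v * v)) := by
  have h : (C (α₁ - α₂)⁻¹ : Polynomial Fq) * (C α₁ - C α₂) = 1 := by
    rw [← C_sub, ← C_mul, inv_mul_cancel₀ (sub_ne_zero.mpr hα), C_1]
  simp only [nrdP, C_mul, C_neg, map_ofNat, C_add, C_sub] at *
  linear_combination (-C ξ * C v * C v) * (C (α₁ - α₂)⁻¹ * (C α₁ - C α₂) + 1) * h

set_option maxHeartbeats 2000000 in
theorem descent {α₁ α₂ : Fq} (hα : α₁ ≠ α₂) {ξ : Fq} (hns : ¬ ∃ u : Fq, u ^ 2 = ξ)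
    (S : Submonoid ℍ[RatFunc Fq, RatFunc.C ξ,
      algebraMap (Polynomial Fq) (RatFunc Fq) ((X - C α₁) * (X - C α₂))])
    (h1 : ∀ u v : Fq, ¬ (u = 0 ∧ v = 0) → polyQ ξ _ (C u) (C v) 0 0 ∈ S)
    (h2 : ∀ u v : Fq, ¬ (u = 0 ∧ v = 0) → polyQ ξ _ (C u)
      (C v * (C (α₁ - α₂)⁻¹ * (2 * X - C (α₁ + α₂)))) 0
      (C v * C (-(2) * (α₁ - α₂)⁻¹)) ∈ S) (m : ℕ) :
    ∀ (a b c d : Polynomial Fq) (κ : Fq), κ ≠ 0 →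
      nrdP ξ ((X - C α₁) * (X - C α₂)) a b c d = C κ →
      c.degree < (m : WithBot ℕ) → d.degree < (m : WithBot ℕ) → polyQ ξ _ a b c d ∈ S := by
  have nz : ∀ {u v : Fq}, ¬ (u = 0 ∧ v = 0) → u * u - ξ * (v * v) ≠ 0 :=
    fun hn h => hn (aniso hns h)
  have hscal : ∀ {ν : Fq}, ν ≠ 0 →
      polyQ ξ ((X - C α₁) * (X - C α₂)) (C ν) 0 0 0 ∈ S := fun {ν} hν => by
    simpa using h1 ν 0 (fun h => hν h.1)
  induction m with
  | zero =>
    intro a b c d κ hκ hn hc hd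
    have hc0 : c = 0 := by
      rw [← degree_eq_bot]; simpa [Nat.WithBot.lt_zero_iff] using hc
    have hd0 : d = 0 := by
      rw [← degree_eq_bot]; simpa [Nat.WithBot.lt_zero_iff] using hd
    subst hc0 hd0
    have hn' : a * a - C ξ * (b * b) = C κ := by rw [← hn, nrdP]; ring
    obtain ⟨ha, hb⟩ := deg_bound (k := 0) hns (a := a) (b := b) (by rw [hn']; simp)
    rw [eq_C_of_natDegree_le_zero ha, eq_C_of_natDegree_le_zero hb] at hn' ⊢
    apply h1
    rintro ⟨e1, e2⟩
    rw [e1, e2] at hn'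
    apply hκ
    have : C κ = 0 := by rw [← hn']; simp
    simpa using this
  | succ m ih =>
    intro a b c d κ hκ hn hc hd
    replace hc := natDegree_le_of_lt hc
    replace hd := natDegree_le_of_lt hd
    by_cases hne : c.coeff m = 0 ∧ d.coeff m = 0
    · exact ih a b c d κ hκ hn (degree_lt_of' hc hne.1) (degree_lt_of' hd hne.2)
    have h' : a * a - C ξ * (b * b) - (X ^ 2 - C (α₁ + α₂) * X + C (α₁ * α₂)) *
        (c * c - C ξ * (d * d)) = C κ := by
      rw [← hn, nrdP, C_add, C_mul]; ring
    obtain ⟨ha, hb⟩ : a.natDegree ≤ m + 1 ∧ b.natDegree ≤ m + 1 := by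
      apply deg_bound hns
      rw [sub_eq_iff_eq_add.mp h']
      have hq : (X ^ 2 - C (α₁ + α₂) * X + C (α₁ * α₂)).natDegree ≤ 2 := by
        compute_degree
      have hcc : (c * c).natDegree ≤ 2 * m := natDegree_mul_le.trans (by omega)
      have hdd : (d * d).natDegree ≤ 2 * m := natDegree_mul_le.trans (by omega)
      have hy : (c * c - C ξ * (d * d)).natDegree ≤ 2 * m :=
        (natDegree_sub_le _ _).trans (max_le hcc ((natDegree_C_mul_le _ _).trans hdd))
      have hz : (C κ).natDegree ≤ 2 * (m + 1) := by simp
      have hw : ((X ^ 2 - C (α₁ + α₂) * X + C (α₁ * α₂)) *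
          (c * c - C ξ * (d * d))).natDegree ≤ 2 * (m + 1) :=
        natDegree_mul_le.trans (by omega)
      exact natDegree_add_le_of_degree_le hz hw
    obtain ⟨t1, -⟩ := top_coeffs _ _ _ ha hb hc hd h'
    obtain ⟨u, v, huv, e1, e2⟩ := hilbert90 hns hne t1
    have huv' : ¬ (u = 0 ∧ -v = 0) := fun h => huv ⟨h.1, neg_eq_zero.mp h.2⟩
    -- first multiply by a constant
    have hnu : nrdP ξ ((X - C α₁) * (X - C α₂)) (C u) (C v) 0 0 =
        C (u * u - ξ * (v * v)) := by
      simp only [nrdP, C_mul, C_sub]; ring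
    refine cancel_mem S (nz huv) hnu (hscal (inv_ne_zero (nz huv)))
      (by simpa using h1 u (-v) huv') ?_
    have hn2 := nrdP_mul ξ ((X - C α₁) * (X - C α₂)) (C u) (C v) 0 0 a b c d
    rw [hnu, hn, ← C_mul (a := u * u - ξ * (v * v)) (b := κ)] at hn2
    rw [polyQ_mul]
    simp only [mul_zero, zero_mul, add_zero, sub_zero] at hn2 ⊢
    have bd : ∀ (w : Fq) {k : ℕ} {p : Polynomial Fq}, p.natDegree ≤ k →
      (C w * p).natDegree ≤ k := fun w k p hp => (natDegree_C_mul_le w p).trans hp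
    have e1' : (C u * a + C ξ * C v * b).coeff (m + 1) =
        (C u * c + C ξ * C v * d).coeff m := by
      simpa only [coeff_add, coeff_C_mul, ← C_mul] using e1
    have e2' : (C u * b + C v * a).coeff (m + 1) = -(C u * d + C v * c).coeff m := by
      simpa only [coeff_add, coeff_C_mul, ← C_mul] using e2
    have ha' : (C u * a + C ξ * C v * b).natDegree ≤ m + 1 := by
      rw [← C_mul]; exact natDegree_add_le_of_degree_le (bd _ ha) (bd _ hb)
    have hb' : (C u * b + C v * a).natDegree ≤ m + 1 :=
      natDegree_add_le_of_degree_le (bd _ hb) (bd _ ha)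
    have hc' : (C u * c + C ξ * C v * d).natDegree ≤ m := by
      rw [← C_mul]; exact natDegree_add_le_of_degree_le (bd _ hc) (bd _ hd)
    have hd' : (C u * d + C v * c).natDegree ≤ m :=
      natDegree_add_le_of_degree_le (bd _ hd) (bd _ hc)
    have hκ' := mul_ne_zero (nz huv) hκ
    generalize C u * a + C ξ * C v * b = a' at *
    generalize C u * b + C v * a = b' at *
    generalize C u * c + C ξ * C v * d = c' at *
    generalize C u * d + C v * c = d' at *
    generalize (u * u - ξ * (v * v)) * κ = κ' at *
    by_cases hne' : c'.coeff m = 0 ∧ d'.coeff m = 0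
    · exact ih a' b' c' d' κ' hκ' hn2 (degree_lt_of' hc' hne'.1) (degree_lt_of' hd' hne'.2)
    obtain ⟨A, hA1, hA2⟩ := step2 α₁ α₂ ha' hb' hc' hd' hne' hn2 e1' e2'
    have hA : ¬ (A = 0 ∧ (1 : Fq) = 0) := fun h => one_ne_zero h.2
    have hA' : ¬ (A = 0 ∧ (-1 : Fq) = 0) := fun h => one_ne_zero (neg_eq_zero.mp h.2)
    have hnt := theta2_norm hα ξ A 1
    have hmem := h2 A (-1) hA'
    have hν := nz hA
    generalize A * A - ξ * (1 * 1) = ν at *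
    generalize C (α₁ - α₂)⁻¹ * (2 * X - C (α₁ + α₂)) = b₀ at *
    generalize C (-(2) * (α₁ - α₂)⁻¹) = d₀ at *
    simp only [C_neg, C_1, neg_mul, one_mul] at hnt hmem
    refine cancel_mem (a := C A) (b := b₀) (c := 0) (d := d₀) S hν hnt
      (hscal (inv_ne_zero hν)) (by rw [neg_zero]; exact hmem) ?_
    have hn3 := nrdP_mul ξ ((X - C α₁) * (X - C α₂)) (C A) b₀ 0 d₀ a' b' c' d'
    rw [hnt, hn2, ← C_mul (a := ν) (b := κ')] at hn3
    rw [polyQ_mul]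
    refine ih _ _ _ _ _ (mul_ne_zero hν hκ') hn3 ?_ ?_
    · convert hA1 using 2; ring
    · convert hA2 using 2; ring

theorem nrdP_unit {ξ : Fq} {r a b c d a' b' c' d' : Polynomial Fq}
    (h : polyQ ξ r a b c d * polyQ ξ r a' b' c' d' = 1) :
    ∃ κ : Fq, κ ≠ 0 ∧ nrdP ξ r a b c d = C κ := by
  rw [polyQ_mul, ← polyQ_one] at h
  obtain ⟨e1, e2, e3, e4⟩ := polyQ_inj h
  have hm := nrdP_mul ξ r a b c d a' b' c' d'
  rw [e1, e2, e3, e4] at hm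
  have hu : IsUnit (nrdP ξ r a b c d) :=
    IsUnit.of_mul_eq_one (nrdP ξ r a' b' c' d') (by rw [← hm, nrdP]; ring)
  obtain ⟨κ, hκ, e⟩ := Polynomial.isUnit_iff.mp hu
  exact ⟨κ, hκ.ne_zero, e.symm⟩

end Helpers

theorem memLambda_polyQ {Fq : Type*} [Field Fq] [Fintype Fq] (ξ : Fq)
    (r a b c d : Polynomial Fq) : memLambda (polyQ ξ r a b c d) :=
  ⟨⟨a, rfl⟩, ⟨b, rfl⟩, ⟨c, rfl⟩, ⟨d, rfl⟩⟩

theorem memLambda_exists {Fq : Type*} [Field Fq] [Fintype Fq] {ξ : Fq} {r : Polynomial Fq}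
    {x : ℍ[RatFunc Fq, RatFunc.C ξ, algebraMap (Polynomial Fq) (RatFunc Fq) r]}
    (h : memLambda x) : ∃ a b c d, x = polyQ ξ r a b c d := by
  obtain ⟨⟨a, ha⟩, ⟨b, hb⟩, ⟨c, hc⟩, ⟨d, hd⟩⟩ := h
  exact ⟨a, b, c, d, by ext <;> simp [polyQ, *]⟩

theorem memLambda_mul {Fq : Type*} [Field Fq] [Fintype Fq] {ξ : Fq} {r : Polynomial Fq}
    {x y : ℍ[RatFunc Fq, RatFunc.C ξ, algebraMap (Polynomial Fq) (RatFunc Fq) r]}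
    (hx : memLambda x) (hy : memLambda y) : memLambda (x * y) := by
  obtain ⟨a, b, c, d, rfl⟩ := memLambda_exists hx
  obtain ⟨a', b', c', d', rfl⟩ := memLambda_exists hy
  rw [polyQ_mul]; exact memLambda_polyQ _ _ _ _ _ _

theorem unit_of_norm {Fq : Type*} [Field Fq] [Fintype Fq] {ξ κ : Fq}
    {r a b c d : Polynomial Fq} (hκ : κ ≠ 0) (h : nrdP ξ r a b c d = C κ) :
    memLambda (polyQ ξ r a b c d) ∧ ∃ mu, memLambda mu ∧
      polyQ ξ r a b c d * mu = 1 ∧ mu * polyQ ξ r a b c d = 1 := by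
  refine ⟨memLambda_polyQ _ _ _ _ _ _, polyQ ξ r a (-b) (-c) (-d) * polyQ ξ r (C κ⁻¹) 0 0 0,
    memLambda_mul (memLambda_polyQ _ _ _ _ _ _) (memLambda_polyQ _ _ _ _ _ _), ?_, ?_⟩
  · rw [← mul_assoc, polyQ_conj', h, polyQ_scal' ξ r hκ]
  · have hcomm : polyQ ξ r a (-b) (-c) (-d) * polyQ ξ r (C κ⁻¹) 0 0 0 =
        polyQ ξ r (C κ⁻¹) 0 0 0 * polyQ ξ r a (-b) (-c) (-d) := by
      rw [polyQ_mul, polyQ_mul]; congr 1 <;> ring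
    rw [hcomm, mul_assoc, polyQ_conj, h, polyQ_scal ξ r hκ]

/-- Let `q` be an odd prime power, `ξ ∈ 𝔽_q^×` a non-square,
`α₁ ≠ α₂ ∈ 𝔽_q`, `𝔯 = (T−α₁)(T−α₂)`, `θ₁ = i`, and `θ₂ = b₀·i + d₀·k` with
`b₀ = (2T−(α₁+α₂))/(α₁−α₂)`, `d₀ = −2/(α₁−α₂)`.  Then the group `Λˣ` of units of the
`𝔽_q[T]`-order `Λ ⊂ H(ξ,𝔯)` is generated by the elements `a + b·θ₁` and `a + b·θ₂`
with `a, b ∈ 𝔽_q` not both zero: an element of `H(ξ,𝔯)` is a unit of `Λ` if and only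
if it lies in the multiplicative closure of this (inverse-closed) set of generators. -/
theorem lambda_units_generated_by_torsion
    (Fq : Type*) [Field Fq] [Fintype Fq] (hodd : Odd (Fintype.card Fq))
    (ξ : Fq) (hξ : ξ ≠ 0) (hns : ¬ ∃ u : Fq, u ^ 2 = ξ)
    (α₁ α₂ : Fq) (hα : α₁ ≠ α₂) :
    let r : Polynomial Fq := (X - C α₁) * (X - C α₂)
    let H := ℍ[RatFunc Fq, RatFunc.C ξ, algebraMap (Polynomial Fq) (RatFunc Fq) r]
    let θ₁ : H := ⟨0, 1, 0, 0⟩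
    let b₀ : Polynomial Fq := C (α₁ - α₂)⁻¹ * (2 * X - C (α₁ + α₂))
    let d₀ : Polynomial Fq := C (-(2) * (α₁ - α₂)⁻¹)
    let θ₂ : H := ⟨0, algebraMap (Polynomial Fq) (RatFunc Fq) b₀, 0,
      algebraMap (Polynomial Fq) (RatFunc Fq) d₀⟩
    let gens : Set H := {x | ∃ a b : Fq, ¬ (a = 0 ∧ b = 0) ∧
      (x = algebraMap (RatFunc Fq) H (RatFunc.C a)
            + algebraMap (RatFunc Fq) H (RatFunc.C b) * θ₁ ∨
       x = algebraMap (RatFunc Fq) H (RatFunc.C a)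
            + algebraMap (RatFunc Fq) H (RatFunc.C b) * θ₂)}
    ∀ lam : H,
      (memLambda lam ∧ ∃ mu : H, memLambda mu ∧ lam * mu = 1 ∧ mu * lam = 1) ↔
        lam ∈ Submonoid.closure gens := by
  intro r H θ₁ b₀ d₀ θ₂ gens lam
  have aux1 : ∀ a b : Fq, algebraMap (RatFunc Fq) H (RatFunc.C a)
      + algebraMap (RatFunc Fq) H (RatFunc.C b) * θ₁ = polyQ ξ r (C a) (C b) 0 0 := by
    intro a b
    ext <;> simp [polyQ, θ₁, H]
  have aux2 : ∀ a b : Fq, algebraMap (RatFunc Fq) H (RatFunc.C a)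
      + algebraMap (RatFunc Fq) H (RatFunc.C b) * θ₂ =
        polyQ ξ r (C a) (C b * b₀) 0 (C b * d₀) := by
    intro a b
    ext <;> simp [polyQ, θ₂, H]
  have nz : ∀ {u v : Fq}, ¬ (u = 0 ∧ v = 0) → u * u - ξ * (v * v) ≠ 0 :=
    fun hn h => hn (aniso hns h)
  constructor
  · rintro ⟨hl, mu, hm, hlm, -⟩
    obtain ⟨a, b, c, d, rfl⟩ := memLambda_exists hl
    obtain ⟨a', b', c', d', rfl⟩ := memLambda_exists hm
    obtain ⟨κ, hκ, hn⟩ := nrdP_unit hlm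
    refine descent hα hns (Submonoid.closure gens) ?_ ?_
      (max c.natDegree d.natDegree + 1) a b c d κ hκ hn ?_ ?_
    · intro u v huv
      exact Submonoid.subset_closure ⟨u, v, huv, Or.inl (aux1 u v).symm⟩
    · intro u v huv
      exact Submonoid.subset_closure ⟨u, v, huv, Or.inr (aux2 u v).symm⟩
    · refine lt_of_le_of_lt degree_le_natDegree ?_
      exact_mod_cast Nat.lt_succ_of_le (le_max_left _ _)
    · refine lt_of_le_of_lt degree_le_natDegree ?_
      exact_mod_cast Nat.lt_succ_of_le (le_max_right _ _)
  · intro h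
    induction h using Submonoid.closure_induction with
    | mem x hx =>
      obtain ⟨a, b, hab, rfl | rfl⟩ := hx
      · rw [aux1]
        refine unit_of_norm (nz hab) ?_
        simp only [nrdP, C_mul, C_sub]; ring
      · rw [aux2]
        exact unit_of_norm (nz hab) (theta2_norm hα ξ a b)
    | one =>
      have h1 : memLambda (1 : H) := by
        have := memLambda_polyQ ξ r 1 0 0 0
        rwa [polyQ_one] at this
      exact ⟨h1, 1, h1, one_mul 1, one_mul 1⟩
    | mul x y _ _ hx hy =>
      obtain ⟨hx, x', hx', e1, e2⟩ := hx
      obtain ⟨hy, y', hy', e3, e4⟩ := hy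
      refine ⟨memLambda_mul hx hy, y' * x', memLambda_mul hy' hx', ?_, ?_⟩
      · rw [mul_assoc, ← mul_assoc y, e3, one_mul, e1]
      · rw [mul_assoc, ← mul_assoc x', e2, one_mul, e4]
end
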